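/- Let 1, α₁, α₂ be linearly independent over ℤ and let m_{ν−1}, m_ν, m_{ν+1} be consecutive best approximations such that the determinant of the 3×3 matrix with rows m_{ν−1}, m_ν, m_{ν+1} is nonzero. Suppose ζ_ν ≤ (8·M_{ν−1}·M_{ν+1})^{−1} and ζ_{ν+1} ≤ (8·M_{ν−1}·M_ν)^{−1}. Then there exists an integer point (x₁⁰, x₂⁰) such that x₁⁰ > 0, x₂⁰ > 0, max{x₁⁰, x₂⁰} ≤ 20·M_{ν+1}, and ‖α₁x₁⁰ + α₂x₂⁰‖ < 40·M_{ν+1}·M_ν^{−1}·ζ_ν. -/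

import Mathlib

/-- distance from a real number to the nearest integer -/
noncomputable def nint (ξ : ℝ) : ℝ := |ξ - round ξ|

/-- `1, α₁, α₂` are linearly independent over `ℤ` -/
def ZLinIndep (α₁ α₂ : ℝ) : Prop :=
  ∀ a b c : ℤ, (a : ℝ) + b * α₁ + c * α₂ = 0 → a = 0 ∧ b = 0 ∧ c = 0

/-- the golden ratio τ = (1+√5)/2 -/
noncomputable def tau : ℝ := (1 + Real.sqrt 5) / 2

/-- the value of the linear form ζ(m) = m₀ + m₁α₁ + m₂α₂ at an integer vector m -/
noncomputable def zform (α₁ α₂ : ℝ) (m : ℤ × ℤ × ℤ) : ℝ :=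
  (m.1 : ℝ) + m.2.1 * α₁ + m.2.2 * α₂

/-- the height M(m) = max{|m₁|, |m₂|} of an integer vector m = (m₀, m₁, m₂) -/
def hgt (m : ℤ × ℤ × ℤ) : ℤ := max |m.2.1| |m.2.2|

/-- `m` is a best approximation (in the sense of the linear form) for `α₁, α₂`:
`|ζ(m)|` is minimal among all integer vectors `n` with `0 < max{|n₁|,|n₂|} ≤ max{|m₁|,|m₂|}`. -/
noncomputable def IsBestApprox (α₁ α₂ : ℝ) (m : ℤ × ℤ × ℤ) : Prop :=
  0 < hgt m ∧
  ∀ n : ℤ × ℤ × ℤ, 0 < hgt n → hgt n ≤ hgt m →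
    |zform α₁ α₂ m| ≤ |zform α₁ α₂ n|

/-- `m` and `m'` are two consecutive best approximations (`m = m_ν`, `m' = m_{ν+1}`):
both are best approximations, `M(m) < M(m')`, and no best approximation has height
strictly between them. -/
noncomputable def ConsecutiveBest (α₁ α₂ : ℝ) (m m' : ℤ × ℤ × ℤ) : Prop :=
  IsBestApprox α₁ α₂ m ∧ IsBestApprox α₁ α₂ m' ∧ hgt m < hgt m' ∧
  ∀ n : ℤ × ℤ × ℤ, IsBestApprox α₁ α₂ n → hgt n ≤ hgt m ∨ hgt m' ≤ hgt n

/-!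
If `ζ_ν` and `ζ_{ν+1}` are small, the expansion of the determinant along the column
`(ζ_{ν-1}, ζ_ν, ζ_{ν+1})` is dominated by its first term, so `ζ_{ν-1}` times the area `D` spanned by
the projections of `m_ν, m_{ν+1}` to the `(m₁, m₂)`-plane is at least `1/2`. By the pigeonhole
principle `ζ_{ν-1} (M_ν² - 1) < 1`, hence `M_ν² ≤ 2 D`. So the two projections span a
parallelogram that is not too thin, and if neither of them lies in the open first or third
quadrant, then a combination of three copies of `±m_{ν+1}` with at most about `4 M_{ν+1} / M_ν`
copies of `±m_ν` is carried into the open first quadrant.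
-/

theorem nint_le_abs_sub (ξ : ℝ) (n : ℤ) : nint ξ ≤ |ξ - n| :=
  round_le ξ n

theorem exists_ne_nint_sub_mul_lt_one {ι : Type*} {s : Finset ι} {N : ℕ} (hN : 0 < N)
    (hs : N < s.card) (f : ι → ℝ) :
    ∃ x ∈ s, ∃ y ∈ s, x ≠ y ∧ nint (f x - f y) * N < 1 := by
  have hN' : (0 : ℝ) < N := Nat.cast_pos.2 hN
  have hmaps : Set.MapsTo (fun x => ⌊Int.fract (f x) * N⌋) s (Finset.Ico (0 : ℤ) N) := by
    intro x _
    rw [Finset.coe_Ico, Set.mem_Ico, Int.floor_lt]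
    exact ⟨Int.floor_nonneg.2 (mul_nonneg (Int.fract_nonneg _) hN'.le),
      mul_lt_of_lt_one_left hN' (Int.fract_lt_one _)⟩
  obtain ⟨x, hx, y, hy, hxy, hfloor⟩ :=
    Finset.exists_ne_map_eq_of_card_lt_of_maps_to (by simpa using hs) hmaps
  refine ⟨x, hx, y, hy, hxy, ?_⟩
  calc nint (f x - f y) * N
      ≤ |f x - f y - (⌊f x⌋ - ⌊f y⌋ : ℤ)| * N := by gcongr; exact nint_le_abs_sub _ _
    _ = |Int.fract (f x) * N - Int.fract (f y) * N| := by
      rw [← sub_mul, abs_mul, abs_of_pos hN', Int.fract, Int.fract]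
      push_cast
      ring_nf
    _ < 1 := Int.abs_sub_lt_one_of_floor_eq_floor hfloor

section QuadrantReduction

variable {R : Type*} [CommRing R] [LinearOrder R] [IsStrictOrderedRing R]

theorem exists_abs_eq_one_mul_eq_abs {u v : R} (h : 0 ≤ u * v) :
    ∃ e : R, |e| = 1 ∧ e * u = |u| ∧ e * v = |v| := by
  rcases mul_nonneg_iff.1 h with ⟨hu, hv⟩ | ⟨hu, hv⟩
  · exact ⟨1, by simp, by simp [abs_of_nonneg hu], by simp [abs_of_nonneg hv]⟩
  · exact ⟨-1, by simp, by simp [abs_of_nonpos hu], by simp [abs_of_nonpos hv]⟩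

variable [Archimedean R] {p q r s : R}

theorem exists_intCast_mul_lt_and_lt_intCast_mul (hp : 0 ≤ p) (hq : 0 ≤ q) (hs : 0 ≤ s)
    (h : p * q < q * r - p * s) :
    ∃ X : ℤ, 0 ≤ X ∧ X * p < r ∧ s < X * q ∧ X * q ≤ s + q := by
  have hq' : 0 < q := hq.lt_of_ne' <| by
    rintro rfl
    linarith [mul_nonneg hp hs]
  obtain ⟨X, ⟨hsX, hXs⟩, -⟩ := existsUnique_add_zsmul_mem_Ioc hq' 0 s
  rw [zero_add, zsmul_eq_mul] at hsX hXs
  have hX : (0 : R) < X := pos_of_mul_pos_left (hs.trans_lt hsX) hq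
  refine ⟨X, by exact_mod_cast hX.le, lt_of_mul_lt_mul_right ?_ hq, hsX, hXs⟩
  calc X * p * q = X * q * p := by ring
    _ ≤ (s + q) * p := by gcongr
    _ < r * q := by linarith

/-- Geometrically, `(p, -q)` and `(r, -s)` lie in the closed fourth quadrant, and
`X (p, -q) + Y (r, -s)` lies in the open first quadrant. -/
theorem exists_combination_pos_neg (hp : 0 ≤ p) (hq : 0 ≤ q) (hr : 0 ≤ r) (hs : 0 ≤ s)
    (h : p * q < |q * r - p * s|) :
    ∃ X Y : ℤ, |Y| = 1 ∧ 0 < X * p + Y * r ∧ X * q + Y * s < 0 ∧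
      |X| * p ≤ r + p ∧ |X| * q ≤ s + q := by
  rcases lt_abs.1 h with h | h
  · obtain ⟨X, hX, hXp, hXq, hXq'⟩ := exists_intCast_mul_lt_and_lt_intCast_mul hp hq hs h
    refine ⟨-X, 1, abs_one, ?_, ?_, ?_, ?_⟩ <;>
      simp only [abs_neg, abs_of_nonneg hX, Int.cast_neg, Int.cast_one] <;> linarith
  · obtain ⟨X, hX, hXq, hXp, hXp'⟩ :=
      exists_intCast_mul_lt_and_lt_intCast_mul (r := s) hq hp hr (by linarith)
    refine ⟨X, -1, by simp, ?_, ?_, ?_, ?_⟩ <;>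
      simp only [abs_of_nonneg hX, Int.cast_neg, Int.cast_one] <;> linarith

end QuadrantReduction

/-- The oriented area of the parallelogram spanned by the projections `(m₁, m₂)` and `(n₁, n₂)`,
that is, the minor which multiplies the first column in the determinant of three integer vectors. -/
def planarDet (m n : ℤ × ℤ × ℤ) : ℤ := m.2.1 * n.2.2 - m.2.2 * n.2.1

section Height

variable {m n : ℤ × ℤ × ℤ}

theorem hgt_nonneg (m : ℤ × ℤ × ℤ) : 0 ≤ hgt m :=
  (abs_nonneg _).trans (le_max_left _ _)

theorem abs_fst_le_hgt (m : ℤ × ℤ × ℤ) : |m.2.1| ≤ hgt m :=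
  le_max_left _ _

theorem abs_snd_le_hgt (m : ℤ × ℤ × ℤ) : |m.2.2| ≤ hgt m :=
  le_max_right _ _

theorem hgt_pos_iff : 0 < hgt m ↔ m.2 ≠ 0 := by
  simp [hgt, Prod.ext_iff, imp_iff_not_or]

theorem hgt_le_iff_mem_Icc {H : ℤ} : hgt m ≤ H ↔ m.2 ∈ Finset.Icc (-H, -H) (H, H) := by
  simp only [hgt, max_le_iff, abs_le, Finset.mem_Icc, Prod.le_def]
  tauto

theorem hgt_combination_le (X Y : ℤ) (m n : ℤ × ℤ × ℤ) :
    hgt (X • m + Y • n) ≤ |X| * hgt m + |Y| * hgt n := by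
  have coord_le {u v : ℤ} (hu : |u| ≤ hgt m) (hv : |v| ≤ hgt n) :
      |X * u + Y * v| ≤ |X| * hgt m + |Y| * hgt n :=
    calc |X * u + Y * v| ≤ |X * u| + |Y * v| := abs_add_le _ _
      _ = |X| * |u| + |Y| * |v| := by rw [abs_mul, abs_mul]
      _ ≤ |X| * hgt m + |Y| * hgt n := by gcongr
  exact max_le (coord_le (abs_fst_le_hgt m) (abs_fst_le_hgt n))
    (coord_le (abs_snd_le_hgt m) (abs_snd_le_hgt n))

theorem abs_planarDet_le (m n : ℤ × ℤ × ℤ) : |planarDet m n| ≤ 2 * (hgt m * hgt n) :=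
  calc |planarDet m n| ≤ |m.2.1 * n.2.2| + |m.2.2 * n.2.1| := abs_sub _ _
    _ = |m.2.1| * |n.2.2| + |m.2.2| * |n.2.1| := by rw [abs_mul, abs_mul]
    _ ≤ hgt m * hgt n + hgt m * hgt n := by
      have := hgt_nonneg m
      gcongr <;> first | apply abs_fst_le_hgt | apply abs_snd_le_hgt
    _ = 2 * (hgt m * hgt n) := by ring

theorem exists_pos_multiple (h : 0 < m.2.1 * m.2.2) :
    ∃ e : ℤ, |e| = 1 ∧ 0 < e * m.2.1 ∧ 0 < e * m.2.2 := by
  obtain ⟨e, he, h₁, h₂⟩ := exists_abs_eq_one_mul_eq_abs h.le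
  exact ⟨e, he, h₁ ▸ abs_pos.2 (left_ne_zero_of_mul h.ne'),
    h₂ ▸ abs_pos.2 (right_ne_zero_of_mul h.ne')⟩

theorem exists_pos_combination_of_mul_nonpos {k : ℤ} (hk : 0 ≤ k)
    (hm : m.2.1 * m.2.2 ≤ 0) (hn : n.2.1 * n.2.2 ≤ 0) (h : hgt m ^ 2 < k * |planarDet m n|) :
    ∃ X Y : ℤ, 0 < (X • m + Y • n).2.1 ∧ 0 < (X • m + Y • n).2.2 ∧
      |X| * hgt m + |Y| * hgt n ≤ 2 * k * hgt n + hgt m := by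
  obtain ⟨d, hd, hd₁, hd₂⟩ := exists_abs_eq_one_mul_eq_abs
    (u := m.2.1) (v := -m.2.2) (by linarith)
  obtain ⟨e, he, he₁, he₂⟩ := exists_abs_eq_one_mul_eq_abs
    (u := n.2.1) (v := -n.2.2) (by linarith)
  rw [abs_neg] at hd₂ he₂
  have hdet : |(|m.2.2| * (k * |n.2.1|) - |m.2.1| * (k * |n.2.2|))| = k * |planarDet m n| :=
    calc |(|m.2.2| * (k * |n.2.1|) - |m.2.1| * (k * |n.2.2|))|
        = |d * e * (k * planarDet m n)| := by
          rw [← hd₁, ← hd₂, ← he₁, ← he₂, planarDet]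
          ring_nf
      _ = k * |planarDet m n| := by simp [abs_mul, hd, he, abs_of_nonneg hk]
  have hmul : |m.2.1| * |m.2.2| ≤ hgt m ^ 2 := by
    rw [sq]
    exact mul_le_mul (abs_fst_le_hgt m) (abs_snd_le_hgt m) (abs_nonneg _) (hgt_nonneg m)
  obtain ⟨X, Y, hY, hpos, hneg, hX₁, hX₂⟩ := exists_combination_pos_neg
    (abs_nonneg m.2.1) (abs_nonneg m.2.2) (mul_nonneg hk (abs_nonneg n.2.1))
    (mul_nonneg hk (abs_nonneg n.2.2)) ((hmul.trans_lt h).trans_eq hdet.symm)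
  simp only [Int.cast_id] at hpos hneg hX₁ hX₂
  refine ⟨X * d, Y * k * e, ?_, ?_, ?_⟩
  · rw [← hd₁, ← he₁] at hpos
    simp only [Prod.snd_add, Prod.fst_add, Prod.smul_snd, Prod.smul_fst, smul_eq_mul]
    linarith
  · rw [← hd₂, ← he₂] at hneg
    simp only [Prod.snd_add, Prod.smul_snd, smul_eq_mul]
    linarith
  · have hXm : |X| * hgt m ≤ k * hgt n + hgt m := by
      rw [hgt, mul_max_of_nonneg _ _ (abs_nonneg X)]
      refine max_le (hX₁.trans ?_) (hX₂.trans ?_) <;> gcongr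
      exacts [abs_fst_le_hgt n, le_max_left _ _, abs_snd_le_hgt n, le_max_right _ _]
    simp only [abs_mul, hd, he, hY, abs_of_nonneg hk]
    linarith

theorem exists_pos_combination {k : ℤ} (hk : 1 ≤ k) (hmn : hgt m ≤ hgt n)
    (h : hgt m ^ 2 < k * |planarDet m n|) :
    ∃ X Y : ℤ, 0 < (X • m + Y • n).2.1 ∧ 0 < (X • m + Y • n).2.2 ∧
      |X| * hgt m + |Y| * hgt n ≤ (2 * k + 1) * hgt n := by
  have hn₀ := hgt_nonneg n
  have hle : hgt n ≤ (2 * k + 1) * hgt n := le_mul_of_one_le_left hn₀ (by linarith)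
  rcases lt_or_ge 0 (m.2.1 * m.2.2) with hm | hm
  · obtain ⟨e, he, h₁, h₂⟩ := exists_pos_multiple hm
    exact ⟨e, 0, by simpa using h₁, by simpa using h₂, by simpa [he] using hmn.trans hle⟩
  rcases lt_or_ge 0 (n.2.1 * n.2.2) with hn | hn
  · obtain ⟨e, he, h₁, h₂⟩ := exists_pos_multiple hn
    exact ⟨0, e, by simpa using h₁, by simpa using h₂, by simpa [he] using hle⟩
  obtain ⟨X, Y, h₁, h₂, hXY⟩ := exists_pos_combination_of_mul_nonpos (by linarith) hm hn h
  exact ⟨X, Y, h₁, h₂, by linarith⟩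

end Height

section LinearForm

variable {α₁ α₂ : ℝ} {a b c : ℤ × ℤ × ℤ}

theorem nint_le_abs_zform (m : ℤ × ℤ × ℤ) :
    nint (α₁ * m.2.1 + α₂ * m.2.2) ≤ |zform α₁ α₂ m| := by
  convert nint_le_abs_sub _ (-m.1) using 2
  rw [zform]
  push_cast
  ring

theorem exists_abs_zform_eq_nint (α₁ α₂ : ℝ) (x : ℤ × ℤ) :
    ∃ p : ℤ, |zform α₁ α₂ (p, x)| = nint (α₁ * x.1 + α₂ * x.2) := by
  refine ⟨-round (α₁ * x.1 + α₂ * x.2), ?_⟩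
  rw [zform, nint]
  push_cast
  ring_nf

theorem zform_combination (X Y : ℤ) (m n : ℤ × ℤ × ℤ) :
    zform α₁ α₂ (X • m + Y • n) = X * zform α₁ α₂ m + Y * zform α₁ α₂ n := by
  simp only [zform, Prod.fst_add, Prod.snd_add, Prod.smul_fst, Prod.smul_snd, smul_eq_mul]
  push_cast
  ring

theorem abs_zform_combination_le (h : |zform α₁ α₂ c| ≤ |zform α₁ α₂ b|) (X Y : ℤ) :
    |zform α₁ α₂ (X • b + Y • c)| ≤ (|(X : ℝ)| + |(Y : ℝ)|) * |zform α₁ α₂ b| :=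
  calc |zform α₁ α₂ (X • b + Y • c)|
      ≤ |X * zform α₁ α₂ b| + |Y * zform α₁ α₂ c| := zform_combination X Y b c ▸ abs_add_le _ _
    _ = |(X : ℝ)| * |zform α₁ α₂ b| + |(Y : ℝ)| * |zform α₁ α₂ c| := by rw [abs_mul, abs_mul]
    _ ≤ |(X : ℝ)| * |zform α₁ α₂ b| + |(Y : ℝ)| * |zform α₁ α₂ b| := by gcongr
    _ = (|(X : ℝ)| + |(Y : ℝ)|) * |zform α₁ α₂ b| := by ring

theorem ZLinIndep.zform_ne_zero (h : ZLinIndep α₁ α₂) {m : ℤ × ℤ × ℤ} (hm : 0 < hgt m) :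
    zform α₁ α₂ m ≠ 0 := fun h₀ =>
  hgt_pos_iff.1 hm (Prod.ext_iff.2 (h _ _ _ h₀).2)

theorem exists_hgt_lt_abs_zform_mul_lt_one (α₁ α₂ : ℝ) {B : ℤ} (hB : 2 ≤ B) :
    ∃ n : ℤ × ℤ × ℤ, 0 < hgt n ∧ hgt n < B ∧ |zform α₁ α₂ n| * ((B : ℝ) ^ 2 - 1) < 1 := by
  lift B to ℕ using by linarith
  have hB₂ : 4 ≤ B ^ 2 := Nat.pow_le_pow_left (by exact_mod_cast hB) 2
  obtain ⟨x, hx, y, hy, hxy, hlt⟩ := exists_ne_nint_sub_mul_lt_one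
    (s := Finset.Ico (0 : ℤ) B ×ˢ Finset.Ico (0 : ℤ) B) (N := B ^ 2 - 1) (by omega)
    (by simp only [Finset.card_product, Int.card_Ico, sub_zero, Int.toNat_natCast, ← sq]; omega)
    (fun z => α₁ * z.1 + α₂ * z.2)
  obtain ⟨p, hp⟩ := exists_abs_zform_eq_nint α₁ α₂ (x - y)
  refine ⟨(p, x - y), hgt_pos_iff.2 (sub_ne_zero.2 hxy), ?_, ?_⟩
  · simp only [Finset.mem_product, Finset.mem_Ico] at hx hy
    simp only [hgt, max_lt_iff, abs_lt, Prod.fst_sub, Prod.snd_sub]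
    omega
  · rw [Nat.cast_sub (by omega)] at hlt
    convert hlt using 2
    · rw [hp, Prod.fst_sub, Prod.snd_sub]
      push_cast
      ring_nf
    · push_cast
      rfl

theorem exists_isBestApprox_hgt_le (α₁ α₂ : ℝ) {n : ℤ × ℤ × ℤ} (hn : 0 < hgt n) :
    ∃ m, IsBestApprox α₁ α₂ m ∧ hgt m ≤ hgt n ∧ |zform α₁ α₂ m| ≤ |zform α₁ α₂ n| := by
  let S : Finset (ℤ × ℤ) := (Finset.Icc (-hgt n, -hgt n) (hgt n, hgt n)).erase 0
  have mem_S {k : ℤ × ℤ × ℤ} : k.2 ∈ S ↔ 0 < hgt k ∧ hgt k ≤ hgt n := by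
    rw [Finset.mem_erase, hgt_pos_iff, hgt_le_iff_mem_Icc]
  obtain ⟨z, hz, hmin⟩ := S.exists_min_image (fun z => nint (α₁ * z.1 + α₂ * z.2))
    ⟨n.2, mem_S.2 ⟨hn, le_rfl⟩⟩
  obtain ⟨p, hp⟩ := exists_abs_zform_eq_nint α₁ α₂ z
  obtain ⟨hpos, hle⟩ := mem_S (k := (p, z)).1 hz
  have hmin' {k : ℤ × ℤ × ℤ} (hk : 0 < hgt k) (hkn : hgt k ≤ hgt n) :
      |zform α₁ α₂ (p, z)| ≤ |zform α₁ α₂ k| :=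
    hp.trans_le ((hmin _ (mem_S.2 ⟨hk, hkn⟩)).trans (nint_le_abs_zform k))
  exact ⟨(p, z), ⟨hpos, fun k hk hkz => hmin' hk (hkz.trans hle)⟩, hle, hmin' hn le_rfl⟩

namespace ConsecutiveBest

theorem abs_zform_le (hab : ConsecutiveBest α₁ α₂ a b) {n : ℤ × ℤ × ℤ} (hn : 0 < hgt n)
    (hnb : hgt n < hgt b) : |zform α₁ α₂ a| ≤ |zform α₁ α₂ n| := by
  obtain ⟨ha, -, -, hgap⟩ := hab
  obtain ⟨m, hm, hmn, hζ⟩ := exists_isBestApprox_hgt_le α₁ α₂ hn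
  have hma : hgt m ≤ hgt a := (hgap m hm).resolve_right (hmn.trans_lt hnb).not_ge
  exact (ha.2 m hm.1 hma).trans hζ

theorem abs_zform_mul_lt_one (hab : ConsecutiveBest α₁ α₂ a b) :
    |zform α₁ α₂ a| * ((hgt b : ℝ) ^ 2 - 1) < 1 := by
  have hb : 2 ≤ hgt b := by linarith [hab.1.1, hab.2.2.1]
  obtain ⟨n, hn, hnb, hlt⟩ := exists_hgt_lt_abs_zform_mul_lt_one α₁ α₂ hb
  have hsq : (0 : ℝ) ≤ (hgt b : ℝ) ^ 2 - 1 := by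
    have : (2 : ℝ) ≤ hgt b := by exact_mod_cast hb
    nlinarith
  exact (mul_le_mul_of_nonneg_right (hab.abs_zform_le hn hnb) hsq).trans_lt hlt

end ConsecutiveBest

theorem det_eq_zform_mul_planarDet (α₁ α₂ : ℝ) (a b c : ℤ × ℤ × ℤ) :
    ((Matrix.det !![a.1, a.2.1, a.2.2; b.1, b.2.1, b.2.2; c.1, c.2.1, c.2.2] : ℤ) : ℝ) =
      zform α₁ α₂ a * planarDet b c - zform α₁ α₂ b * planarDet a c
        + zform α₁ α₂ c * planarDet a b := by
  rw [Matrix.det_fin_three]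
  simp only [Matrix.of_apply, Matrix.cons_val', Matrix.cons_val_zero,
    Matrix.cons_val_fin_one, Matrix.cons_val_one, Matrix.cons_val, zform, planarDet]
  push_cast
  ring

theorem abs_mul_planarDet_le_quarter {t : ℝ} {m n : ℤ × ℤ × ℤ}
    (ht : |t| ≤ (8 * (hgt m : ℝ) * (hgt n : ℝ))⁻¹) : |t * planarDet m n| ≤ 1 / 4 := by
  have hdet : |(planarDet m n : ℝ)| ≤ 2 * (hgt m * hgt n) := by
    exact_mod_cast abs_planarDet_le m n
  calc |t * planarDet m n| = |t| * |(planarDet m n : ℝ)| := abs_mul _ _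
    _ ≤ (8 * (hgt m : ℝ) * hgt n)⁻¹ * (2 * (hgt m * hgt n)) :=
      mul_le_mul ht hdet (abs_nonneg _) ((abs_nonneg t).trans ht)
    _ = (hgt m * hgt n : ℝ)⁻¹ * (hgt m * hgt n) / 4 := by
      rw [mul_assoc, mul_inv 8]
      ring
    _ ≤ 1 / 4 := by gcongr; exact inv_mul_le_one

theorem half_le_abs_zform_mul_abs_planarDet
    (hdet : Matrix.det !![a.1, a.2.1, a.2.2; b.1, b.2.1, b.2.2; c.1, c.2.1, c.2.2] ≠ 0)
    (hb : |zform α₁ α₂ b| ≤ (8 * (hgt a : ℝ) * (hgt c : ℝ))⁻¹)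
    (hc : |zform α₁ α₂ c| ≤ (8 * (hgt a : ℝ) * (hgt b : ℝ))⁻¹) :
    1 / 2 ≤ |zform α₁ α₂ a| * |(planarDet b c : ℝ)| := by
  have hone : (1 : ℝ) ≤ |zform α₁ α₂ a * planarDet b c - zform α₁ α₂ b * planarDet a c
      + zform α₁ α₂ c * planarDet a b| := by
    rw [← det_eq_zform_mul_planarDet]
    exact_mod_cast Int.one_le_abs hdet
  rw [← abs_mul]
  linarith [abs_add_le (zform α₁ α₂ a * planarDet b c - zform α₁ α₂ b * planarDet a c)
      (zform α₁ α₂ c * planarDet a b),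
    abs_sub (zform α₁ α₂ a * planarDet b c) (zform α₁ α₂ b * planarDet a c),
    abs_mul_planarDet_le_quarter hb, abs_mul_planarDet_le_quarter hc]

theorem ConsecutiveBest.sq_hgt_le_two_mul_abs_planarDet (hab : ConsecutiveBest α₁ α₂ a b)
    (hdet : Matrix.det !![a.1, a.2.1, a.2.2; b.1, b.2.1, b.2.2; c.1, c.2.1, c.2.2] ≠ 0)
    (hb : |zform α₁ α₂ b| ≤ (8 * (hgt a : ℝ) * (hgt c : ℝ))⁻¹)
    (hc : |zform α₁ α₂ c| ≤ (8 * (hgt a : ℝ) * (hgt b : ℝ))⁻¹) :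
    hgt b ^ 2 ≤ 2 * |planarDet b c| := by
  have hlower := half_le_abs_zform_mul_abs_planarDet hdet hb hc
  have hupper := hab.abs_zform_mul_lt_one
  have hlt : (hgt b : ℝ) ^ 2 - 1 < 2 * |(planarDet b c : ℝ)| :=
    lt_of_mul_lt_mul_left (by linarith) (abs_nonneg (zform α₁ α₂ a))
  have hltZ : hgt b ^ 2 - 1 < 2 * |planarDet b c| := by exact_mod_cast hlt
  linarith

end LinearForm

theorem lemma2_general (α₁ α₂ : ℝ) (a b c : ℤ × ℤ × ℤ) (hab : ConsecutiveBest α₁ α₂ a b)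
    (hbc : hgt b ≤ hgt c) (hζ : |zform α₁ α₂ c| ≤ |zform α₁ α₂ b|)
    (hdet : Matrix.det !![a.1, a.2.1, a.2.2; b.1, b.2.1, b.2.2; c.1, c.2.1, c.2.2] ≠ 0)
    (h1 : |zform α₁ α₂ b| ≤ (8 * (hgt a : ℝ) * (hgt c : ℝ))⁻¹)
    (h2 : |zform α₁ α₂ c| ≤ (8 * (hgt a : ℝ) * (hgt b : ℝ))⁻¹) :
    ∃ x : ℤ × ℤ, 0 < x.1 ∧ 0 < x.2 ∧ max x.1 x.2 ≤ 7 * hgt c ∧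
      nint (α₁ * x.1 + α₂ * x.2) ≤ 7 * (hgt c : ℝ) * (hgt b : ℝ)⁻¹ * |zform α₁ α₂ b| := by
  have hb : 0 < hgt b := hab.2.1.1
  have harea : hgt b ^ 2 < 3 * |planarDet b c| := by
    linarith [hab.sq_hgt_le_two_mul_abs_planarDet hdet h1 h2, pow_pos hb 2]
  obtain ⟨X, Y, hx₁, hx₂, hXY⟩ := exists_pos_combination (by norm_num) hbc harea
  have hcoeff : (|X| + |Y|) * hgt b ≤ 7 * hgt c := by
    linarith [mul_le_mul_of_nonneg_left hbc (abs_nonneg Y)]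
  refine ⟨(X • b + Y • c).2, hx₁, hx₂, ?_, ?_⟩
  · calc max _ _ ≤ hgt (X • b + Y • c) := max_le_max (le_abs_self _) (le_abs_self _)
      _ ≤ 7 * hgt c := (hgt_combination_le X Y b c).trans hXY
  · calc nint _ ≤ |zform α₁ α₂ (X • b + Y • c)| := nint_le_abs_zform _
      _ ≤ (|(X : ℝ)| + |(Y : ℝ)|) * |zform α₁ α₂ b| := abs_zform_combination_le hζ X Y
      _ ≤ 7 * (hgt c : ℝ) * (hgt b : ℝ)⁻¹ * |zform α₁ α₂ b| := by
        gcongr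
        rw [← div_eq_mul_inv, le_div_iff₀ (Int.cast_pos.2 hb)]
        exact_mod_cast hcoeff

/-- Lemma 2: for consecutive best approximations a = m_{ν−1}, b = m_ν, c = m_{ν+1} with
nonzero determinant and ζ_ν ≤ (8M_{ν−1}M_{ν+1})⁻¹, ζ_{ν+1} ≤ (8M_{ν−1}M_ν)⁻¹, there is an
integer point with positive coordinates, max{x₁⁰,x₂⁰} ≤ 20M_{ν+1}, and
‖α₁x₁⁰+α₂x₂⁰‖ < 40·M_{ν+1}·M_ν⁻¹·ζ_ν. -/
theorem lemma2 (α₁ α₂ : ℝ) (h : ZLinIndep α₁ α₂)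
    (a b c : ℤ × ℤ × ℤ)
    (hab : ConsecutiveBest α₁ α₂ a b) (hbc : ConsecutiveBest α₁ α₂ b c)
    (hdet : Matrix.det !![a.1, a.2.1, a.2.2; b.1, b.2.1, b.2.2; c.1, c.2.1, c.2.2] ≠ 0)
    (h1 : |zform α₁ α₂ b| ≤ (8 * (hgt a : ℝ) * (hgt c : ℝ))⁻¹)
    (h2 : |zform α₁ α₂ c| ≤ (8 * (hgt a : ℝ) * (hgt b : ℝ))⁻¹) :
    ∃ x : ℤ × ℤ, 0 < x.1 ∧ 0 < x.2 ∧
      ((max x.1 x.2 : ℤ) : ℝ) ≤ 20 * (hgt c : ℝ) ∧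
      nint (α₁ * x.1 + α₂ * x.2) < 40 * (hgt c : ℝ) * (hgt b : ℝ)⁻¹ * |zform α₁ α₂ b| := by
  have hb : 0 < hgt b := hbc.1.1
  have hc : 0 < hgt c := hbc.2.1.1
  have hζ : 0 < |zform α₁ α₂ b| := abs_pos.2 (h.zform_ne_zero hb)
  obtain ⟨x, hx₁, hx₂, hmax, hnint⟩ := lemma2_general α₁ α₂ a b c hab hbc.2.2.1.le
    (hbc.2.1.2 b hb hbc.2.2.1.le) hdet h1 h2
  refine ⟨x, hx₁, hx₂, by exact_mod_cast hmax.trans (by linarith), hnint.trans_lt ?_⟩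
  gcongr
  norm_num
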